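/- arXiv:0802.2445 — 5 statements merged into one kernel-verified Lean document; each statement's English description precedes it below -/
import Mathlib

section
/- If n ≥ 1 and x ∈ [0,1] satisfies T^n(x) = x, then there exists a natural number m such that x = 2m/(2^n - 1) or x = 2m/(2^n + 1). -/
/-! Each iterate `T^[n]` is piecewise affine with branches `±(2 ^ n * x - 2 * k)`, `k` an integer
(`tent_iterate_form`). On such a branch, `T^[n] x = x` is a linear equation whose solution is
`2 * k / (2 ^ n - 1)` or `2 * k / (2 ^ n + 1)`, and `k ≥ 0` because `x ≥ 0`. -/

/-- The standard tent map `T(x) = 1 - |2x - 1|`. -/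
noncomputable def T : ℝ → ℝ := fun x => 1 - |2 * x - 1|

/-- The branches of `T^[n]` have slope `±2 ^ n` and even integer intercept: the branches `2 * y`
and `2 - 2 * y` of `T` both preserve evenness of the intercept. -/
theorem tent_iterate_form (n : ℕ) (x : ℝ) :
    ∃ k : ℤ, T^[n] x = 2 ^ n * x - 2 * k ∨ T^[n] x = 2 * k - 2 ^ n * x := by
  induction n with
  | zero => exact ⟨0, Or.inl (by simp)⟩
  | succ n ih =>
    obtain ⟨k, hk⟩ := ih
    rw [Function.iterate_succ_apply']
    have hT : ∀ y : ℝ, T y = 2 * y ∨ T y = 2 - 2 * y := by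
      intro y
      rcases abs_cases (2 * y - 1) with h | h
      · right; simp only [T]; linarith
      · left; simp only [T]; linarith
    rcases hk with hk | hk <;> rw [hk]
    · rcases hT (2 ^ n * x - 2 * k) with h | h <;> rw [h]
      · exact ⟨2 * k, Or.inl (by push_cast; ring)⟩
      · exact ⟨1 + 2 * k, Or.inr (by push_cast; ring)⟩
    · rcases hT (2 * k - 2 ^ n * x) with h | h <;> rw [h]
      · exact ⟨2 * k, Or.inr (by push_cast; ring)⟩
      · exact ⟨2 * k - 1, Or.inl (by push_cast; ring)⟩

/-- Every `n`-periodic point of the standard tent map in `[0,1]` has the form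
`2m/(2^n - 1)` or `2m/(2^n + 1)` for some natural number `m`. -/
theorem tent_periodic_point_form (n : ℕ) (hn : 1 ≤ n) (x : ℝ)
    (hx : x ∈ Set.Icc (0 : ℝ) 1) (hper : T^[n] x = x) :
    ∃ m : ℕ, x = (2 * m : ℝ) / (2 ^ n - 1) ∨ x = (2 * m : ℝ) / (2 ^ n + 1) := by
  obtain ⟨k, hk⟩ := tent_iterate_form n x
  rw [hper] at hk
  have h2 : (1 : ℝ) < 2 ^ n := one_lt_pow₀ (by norm_num) (by omega)
  have hx0 : 0 ≤ x := hx.1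
  -- `2 * k` is `x` times a positive number, so `k` is a natural number.
  have hk0 : 0 ≤ k := by
    have : (0 : ℝ) ≤ k := by
      rcases hk with hk | hk
      · nlinarith [mul_nonneg hx0 (sub_pos.2 h2).le]
      · nlinarith [mul_nonneg hx0 (zero_lt_one.trans h2).le]
    exact_mod_cast this
  lift k to ℕ using hk0
  rw [Int.cast_natCast] at hk
  refine ⟨k, hk.imp (fun h => ?_) (fun h => ?_)⟩
  · rw [eq_div_iff (by linarith)]; linarith
  · rw [eq_div_iff (by linarith)]; linarith
end

section
/- For every n ≥ 1 and every natural number m with 2m < 2^n - 1, the point x = 2m/(2^n - 1) satisfies T^n(x) = x; that is, every point of [0,1) of the form 2m/(2^n - 1) with even numerator is an n-periodic point of the standard tent map. -/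
/-- If `2^n x` differs by `y ∈ [0,1]` from an even integer, then `T^n x = y`. Both signs of the
difference are needed for the induction, since the decreasing branch of `T` swaps them. -/
lemma tent_iterate_eq (y : ℝ) (hy0 : 0 ≤ y) (hy1 : y ≤ 1) (n : ℕ) :
    ∀ (x : ℝ) (k : ℤ), 0 ≤ x → x ≤ 1 →
      (2 ^ n * x = 2 * k + y ∨ 2 ^ n * x = 2 * k - y) → T^[n] x = y := by
  induction n with
  | zero =>
    intro x k hx0 hx1 h
    simp only [pow_zero, one_mul] at h
    simp only [Function.iterate_zero, id]
    have hk0 : -1 < k := by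
      have : (-1 : ℝ) < k := by rcases h with h | h <;> linarith
      exact_mod_cast this
    have hk1 : k < 2 := by
      have : (k : ℝ) < 2 := by rcases h with h | h <;> linarith
      exact_mod_cast this
    obtain rfl | rfl : k = 0 ∨ k = 1 := by omega
    all_goals
      push_cast at h
      rcases h with h | h <;> linarith
  | succ n ih =>
    intro x k hx0 hx1 h
    rw [Function.iterate_succ_apply]
    rw [pow_succ] at h
    rcases le_total x (1 / 2) with hx | hx
    · have hT : T x = 2 * x := by
        simp only [T]
        rw [abs_of_nonpos (by linarith)]
        ring
      rw [hT]
      refine ih _ k (by linarith) (by linarith) ?_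
      rwa [← mul_assoc]
    · have hT : T x = 2 - 2 * x := by
        simp only [T]
        rw [abs_of_nonneg (by linarith)]
        ring
      rw [hT]
      refine ih _ (2 ^ n - k) (by linarith) (by linarith) ?_
      push_cast
      rcases h with h | h
      · right; linarith
      · left; linarith

/-- Every point of `[0,1)` of the form `2m/(2^n - 1)` (even numerator) is an
`n`-periodic point of the standard tent map. -/
theorem tent_periodic_of_even_numerator (n : ℕ) (hn : 1 ≤ n) (m : ℕ)
    (hm : 2 * m < 2 ^ n - 1) :
    T^[n] ((2 * m : ℝ) / (2 ^ n - 1)) = (2 * m : ℝ) / (2 ^ n - 1) := by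
  have hlt : (2 * m : ℝ) < 2 ^ n - 1 := by
    have h : 2 * m + 1 < 2 ^ n := by omega
    have h' : (2 * m + 1 : ℝ) < 2 ^ n := by exact_mod_cast h
    linarith
  have hm0 : (0 : ℝ) ≤ 2 * m := by positivity
  have hpos : (0 : ℝ) < 2 ^ n - 1 := by linarith
  have hx0 : (0 : ℝ) ≤ 2 * m / (2 ^ n - 1) := div_nonneg hm0 hpos.le
  have hx1 : (2 * m : ℝ) / (2 ^ n - 1) ≤ 1 := (div_le_one hpos).2 hlt.le
  refine tent_iterate_eq _ hx0 hx1 n _ m hx0 hx1 (Or.inl ?_)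
  have h := div_mul_cancel₀ (2 * m : ℝ) hpos.ne'
  push_cast
  linarith
end

section
/- Let n ≥ 1 and let x = 2m/(2^n - 1) ∈ [0,1) for a natural number m with 2m < 2^n - 1. Then the number of indices i with 0 ≤ i ≤ n-1 such that T^i(x) ≥ 1/2 is even; that is, the itinerary of x contains an even number of 1's. -/
theorem tent_mapsTo_unit {y : ℝ} (hy : 0 ≤ y ∧ y ≤ 1) : 0 ≤ T y ∧ T y ≤ 1 := by
  unfold T
  have h : |2 * y - 1| ≤ 1 := abs_le.mpr ⟨by linarith [hy.1], by linarith [hy.2]⟩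
  exact ⟨by linarith, by linarith [abs_nonneg (2 * y - 1)]⟩

theorem tent_iterate_mem_unit {x : ℝ} (hx : 0 ≤ x ∧ x ≤ 1) (k : ℕ) :
    0 ≤ T^[k] x ∧ T^[k] x ≤ 1 := by
  induction k with
  | zero => simpa using hx
  | succ k ih =>
    rw [Function.iterate_succ_apply']
    exact tent_mapsTo_unit ih

/-- The iterates of the tent map modulo even integers: the sign is the parity of the number
of visits to `[1/2, ∞)`. -/
theorem tent_iterate_eq_s8 (x : ℝ) (k : ℕ) :
    ∃ j : ℤ, T^[k] x =
      (-1) ^ ((Finset.range k).filter fun i => (1 : ℝ) / 2 ≤ T^[i] x).card * 2 ^ k * x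
        + 2 * j := by
  induction k with
  | zero => exact ⟨0, by simp⟩
  | succ k ih =>
    obtain ⟨j, hj⟩ := ih
    rw [Function.iterate_succ_apply', Finset.range_add_one, Finset.filter_insert]
    by_cases h : (1 : ℝ) / 2 ≤ T^[k] x
    · refine ⟨1 - 2 * j, ?_⟩
      have hT : T (T^[k] x) = 2 - 2 * T^[k] x := by
        change 1 - |2 * T^[k] x - 1| = _
        rw [abs_of_nonneg (by linarith)]
        ring
      rw [if_pos h, Finset.card_insert_of_notMem (by simp), hT, hj]
      push_cast
      ring
    · refine ⟨2 * j, ?_⟩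
      have hT : T (T^[k] x) = 2 * T^[k] x := by
        change 1 - |2 * T^[k] x - 1| = _
        rw [abs_of_nonpos (by linarith)]
        ring
      rw [if_neg h, hT, hj]
      push_cast
      ring

/-- The itinerary of the `n`-periodic point `2m/(2^n - 1)` contains an even number
of `1`'s: the number of indices `0 ≤ i ≤ n-1` with `T^i(x) ≥ 1/2` is even. -/
theorem tent_itinerary_even_number_of_ones (n : ℕ) (hn : 1 ≤ n) (m : ℕ)
    (hm : 2 * m < 2 ^ n - 1) :
    Even (((Finset.range n).filter fun i =>
      (1 : ℝ) / 2 ≤ T^[i] ((2 * m : ℝ) / (2 ^ n - 1))).card) := by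
  have hmN : 2 * m + 1 < 2 ^ n := by omega
  have hmR : (2 * m + 1 : ℝ) < 2 ^ n := by exact_mod_cast hmN
  have hm0 : (0 : ℝ) ≤ m := Nat.cast_nonneg m
  have hN : (0 : ℝ) < 2 ^ n - 1 := by linarith
  set x : ℝ := (2 * m : ℝ) / (2 ^ n - 1) with hx
  have hx0 : 0 ≤ x := by positivity
  have hx1 : x < 1 := by
    rw [hx, div_lt_one hN]
    linarith
  have hxn : 2 ^ n * x = x + 2 * m := by
    have : x * (2 ^ n - 1) = 2 * m := div_mul_cancel₀ _ hN.ne'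
    linarith
  by_contra hodd
  rw [Nat.not_even_iff_odd] at hodd
  obtain ⟨j, hj⟩ := tent_iterate_eq_s8 x n
  rw [hodd.neg_one_pow, mul_assoc, hxn] at hj
  obtain ⟨h0, h1⟩ := tent_iterate_mem_unit ⟨hx0, hx1.le⟩ n
  -- `T^n(x) + x = 2 (j - m)` is an even integer in `[0, 2)`.
  have hlow : (-1 : ℤ) < j - m := by
    have : (-1 : ℝ) < j - m := by linarith
    exact_mod_cast this
  have hupp : j - (m : ℤ) < 1 := by
    have : (j : ℝ) - m < 1 := by linarith
    exact_mod_cast this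
  have hjm : (j : ℝ) = m := by
    have : j = (m : ℤ) := by omega
    exact_mod_cast this
  have hxz : x = 0 := by linarith
  have hfix : Function.IsFixedPt T 0 := by simp [Function.IsFixedPt, T]
  have hempty : ((Finset.range n).filter fun i => (1 : ℝ) / 2 ≤ T^[i] x) = ∅ := by
    refine Finset.filter_false_of_mem fun i _ => ?_
    rw [hxz, hfix.iterate i]
    norm_num
  rw [hempty] at hodd
  simp at hodd
end

section
/- Fix n ≥ 1. The map sending a point x = 2m/(2^n - 1) ∈ [0,1) (m a natural number, 2m < 2^n - 1) to its itinerary is a bijection from the set of such points onto the set of vectors in (ℤ/2ℤ)^n having an even number of entries equal to 1. In particular, two points 2m/(2^n - 1) and 2k/(2^n - 1) in [0,1) with the same itinerary are equal. -/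
/-- The itinerary of a point `x` for the standard tent map, as a vector in `(ℤ/2ℤ)^n`:
the `i`-th entry (`0`-indexed) is `1` precisely when `T^i(x) ≥ 1/2`. -/
noncomputable def itinerary (n : ℕ) (x : ℝ) : Fin n → ZMod 2 :=
  fun i => if (1 : ℝ) / 2 ≤ T^[(i : ℕ)] x then 1 else 0

/-- The tent map acting on numerators of fractions with denominator `N`. -/
def tentNum (N j : ℤ) : ℤ := if N ≤ 2 * j then 2 * N - 2 * j else 2 * j

/-- The slope sign of the tent map at `j / N`: it is `-1` on the right branch, `1` on the left. -/
def tentSign (N j : ℤ) : ℤ := if N ≤ 2 * j then -1 else 1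

lemma T_div {N : ℤ} (hN : 0 < N) (j : ℤ) : T ((j : ℝ) / N) = (tentNum N j : ℝ) / N := by
  have hN' : (0 : ℝ) < N := by exact_mod_cast hN
  have e : 2 * ((j : ℝ) / N) - 1 = (2 * j - N) / N := by field_simp
  unfold T tentNum
  simp only [e]
  split_ifs with h
  · have h' : (N : ℝ) ≤ 2 * j := by exact_mod_cast h
    rw [abs_of_nonneg (div_nonneg (by linarith) hN'.le)]
    push_cast
    field_simp
    ring
  · have h' : 2 * (j : ℝ) < N := by exact_mod_cast not_le.mp h
    rw [abs_of_nonpos (div_nonpos_of_nonpos_of_nonneg (by linarith) hN'.le)]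
    push_cast
    field_simp
    ring

lemma T_iterate_div {N : ℤ} (hN : 0 < N) (j : ℤ) (k : ℕ) :
    T^[k] ((j : ℝ) / N) = ((tentNum N)^[k] j : ℝ) / N := by
  induction k with
  | zero => simp
  | succ k ih => rw [Function.iterate_succ_apply', ih, T_div hN, Function.iterate_succ_apply']

lemma tentNum_iterate_mem {N j : ℤ} (h0 : 0 ≤ j) (h1 : j ≤ N) (h2 : Even j) (k : ℕ) :
    0 ≤ (tentNum N)^[k] j ∧ (tentNum N)^[k] j ≤ N ∧ Even ((tentNum N)^[k] j) := by
  induction k with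
  | zero => exact ⟨h0, h1, h2⟩
  | succ k ih =>
    rw [Function.iterate_succ_apply']
    obtain ⟨a, b, -⟩ := ih
    unfold tentNum at *
    split_ifs
    · exact ⟨by omega, by omega, by rw [Int.even_iff]; omega⟩
    · exact ⟨by omega, by omega, by rw [Int.even_iff]; omega⟩

lemma dvd_tentNum_iterate (N j : ℤ) (k : ℕ) :
    N ∣ (tentNum N)^[k] j -
      (∏ i ∈ Finset.range k, tentSign N ((tentNum N)^[i] j)) * 2 ^ k * j := by
  induction k with
  | zero => simp
  | succ k ih =>
    rw [Function.iterate_succ_apply', Finset.prod_range_succ]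
    obtain ⟨c, hc⟩ := ih
    generalize (∏ i ∈ Finset.range k, tentSign N ((tentNum N)^[i] j)) = s at *
    generalize (tentNum N)^[k] j = y at *
    unfold tentNum tentSign
    split_ifs
    · exact ⟨2 - 2 * c, by rw [pow_succ]; linear_combination -2 * hc⟩
    · exact ⟨2 * c, by rw [pow_succ]; linear_combination 2 * hc⟩

lemma abs_tentNum_iterate_sub (N a b : ℤ) (k : ℕ)
    (h : ∀ i < k, (N ≤ 2 * (tentNum N)^[i] a ↔ N ≤ 2 * (tentNum N)^[i] b)) :
    |(tentNum N)^[k] a - (tentNum N)^[k] b| = 2 ^ k * |a - b| := by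
  induction k with
  | zero => simp
  | succ k ih =>
    have hk := h k (by omega)
    have ih' := ih fun i hi => h i (by omega)
    rw [Function.iterate_succ_apply', Function.iterate_succ_apply', pow_succ, mul_right_comm, ← ih']
    generalize (tentNum N)^[k] a = y at *
    generalize (tentNum N)^[k] b = z at *
    unfold tentNum
    by_cases hy : N ≤ 2 * y
    · rw [if_pos hy, if_pos (hk.mp hy)]
      rw [show 2 * N - 2 * y - (2 * N - 2 * z) = -((y - z) * 2) by ring, abs_neg, abs_mul]
      simp
    · rw [if_neg hy, if_neg (fun hz => hy (hk.mpr hz))]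
      rw [show 2 * y - 2 * z = (y - z) * 2 by ring, abs_mul]
      simp

lemma tentNum_iterate_zero {N : ℤ} (hN : 0 < N) (k : ℕ) : (tentNum N)^[k] 0 = 0 :=
  Function.iterate_fixed (by simp [tentNum, hN]) k

lemma itinerary_eq_one_iff {n : ℕ} (hn : 1 ≤ n) (m : ℕ) (i : Fin n) :
    itinerary n ((2 * m : ℝ) / (2 ^ n - 1)) i = 1 ↔
      (2 ^ n - 1 : ℤ) ≤ 2 * (tentNum (2 ^ n - 1))^[(i : ℕ)] (2 * m) := by
  have hN : (0 : ℤ) < 2 ^ n - 1 := by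
    have : (1 : ℤ) < 2 ^ n := one_lt_pow₀ (by norm_num) (by omega)
    omega
  have hN' : (0 : ℝ) < ((2 ^ n - 1 : ℤ) : ℝ) := by exact_mod_cast hN
  have e : (2 * m : ℝ) / (2 ^ n - 1) = ((2 * m : ℤ) : ℝ) / ((2 ^ n - 1 : ℤ) : ℝ) := by
    push_cast; rfl
  unfold itinerary
  rw [e, T_iterate_div hN]
  have : (1 : ℝ) / 2 ≤ ((tentNum (2 ^ n - 1))^[(i : ℕ)] (2 * m) : ℤ) / ((2 ^ n - 1 : ℤ) : ℝ) ↔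
      (2 ^ n - 1 : ℤ) ≤ 2 * (tentNum (2 ^ n - 1))^[(i : ℕ)] (2 * m) := by
    rw [div_le_div_iff₀ two_pos hN', one_mul]
    generalize (tentNum (2 ^ n - 1))^[(i : ℕ)] (2 * m : ℤ) = y
    generalize (2 ^ n - 1 : ℤ) = N
    rw [mul_comm 2 y]
    exact_mod_cast Iff.rfl
  rw [← this]
  split_ifs with h
  · exact iff_of_true rfl h
  · exact iff_of_false zero_ne_one h

lemma zmod_two_eq {a b : ZMod 2} (h : a = 1 ↔ b = 1) : a = b := by
  revert a b; decide

/-- The parity condition on the set of ones is linear over `ℤ/2ℤ`. -/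
lemma even_card_ones_iff {n : ℕ} (β : Fin n → ZMod 2) :
    Even ((Finset.univ.filter fun i => β i = 1).card) ↔ ∑ i, β i = 0 := by
  have : ∑ i, β i = ∑ i, if β i = 1 then (1 : ZMod 2) else 0 := by
    refine Finset.sum_congr rfl fun i _ => zmod_two_eq ?_
    split_ifs with h <;> simp [h]
  rw [this, Finset.sum_boole, ZMod.natCast_eq_zero_iff_even]

/-- An even vector is determined by its entries other than the first. -/
lemma card_even_le (k : ℕ) :
    (Finset.univ.filter fun β : Fin (k + 1) → ZMod 2 =>
      Even ((Finset.univ.filter fun i => β i = 1).card)).card ≤ 2 ^ k := by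
  have hc : (Finset.univ : Finset (Fin k → ZMod 2)).card = 2 ^ k := by simp [ZMod.card]
  rw [← hc]
  refine Finset.card_le_card_of_injOn (fun β => Fin.tail β) (fun _ _ => by simp) ?_
  intro β hβ γ hγ h
  simp only [Finset.coe_filter, Finset.mem_univ, true_and, Set.mem_ofPred_eq, even_card_ones_iff,
    Fin.sum_univ_succ] at hβ hγ
  have ht : ∀ i : Fin k, β i.succ = γ i.succ := fun i => congrFun h i
  have h0 : β 0 = γ 0 := by
    simp only [ht] at hβ
    exact add_right_cancel (hβ.trans hγ.symm)
  funext i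
  exact Fin.cases h0 ht i

lemma itinerary_even {n : ℕ} (hn : 1 ≤ n) {m : ℕ} (hm : 2 * m < 2 ^ n - 1) :
    Even ((Finset.univ.filter fun i =>
      itinerary n ((2 * m : ℝ) / (2 ^ n - 1)) i = 1).card) := by
  simp only [itinerary_eq_one_iff hn]
  have hm' : (2 * m : ℤ) < 2 ^ n - 1 := by zify at hm; push_cast [Nat.one_le_two_pow] at hm; omega
  have hodd : (2 ^ n - 1 : ℤ) % 2 = 1 := by
    obtain ⟨k, rfl⟩ : ∃ k, n = k + 1 := ⟨n - 1, by omega⟩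
    rw [pow_succ]; omega
  have hdvd := dvd_tentNum_iterate (2 ^ n - 1) (2 * m) n
  have hmem := tentNum_iterate_mem (N := 2 ^ n - 1) (j := 2 * m) (by omega) hm'.le (by simp) n
  have hprod : ∏ i ∈ Finset.range n, tentSign (2 ^ n - 1) ((tentNum (2 ^ n - 1))^[i] (2 * m)) =
      (-1) ^ (Finset.univ.filter fun i : Fin n =>
        (2 ^ n - 1 : ℤ) ≤ 2 * (tentNum (2 ^ n - 1))^[(i : ℕ)] (2 * m)).card := by
    rw [Finset.prod_range]
    simp [tentSign, Finset.prod_ite]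
  by_contra hcon
  rw [Nat.not_even_iff_odd] at hcon
  rw [hcon.neg_one_pow] at hprod
  rw [hprod] at hdvd
  have hpos : (0 : ℤ) < 2 ^ n - 1 := by omega
  have hm0 : (2 * m : ℤ) = 0 := by
    obtain ⟨h0, h1, h2⟩ := hmem
    generalize (tentNum (2 ^ n - 1))^[n] (2 * m : ℤ) = y at *
    generalize hN : (2 ^ n - 1 : ℤ) = N at *
    have h2n : (2 ^ n : ℤ) = N + 1 := by omega
    rw [h2n] at hdvd
    have hsum : N ∣ y + 2 * m := by
      have := hdvd.sub (Dvd.intro (2 * m : ℤ) rfl : N ∣ N * (2 * m))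
      rwa [show y - -1 * (N + 1) * (2 * m) - N * (2 * m) = y + 2 * m by ring] at this
    -- `N` is odd and divides twice `y / 2 + m < N`.
    obtain ⟨z, rfl⟩ := h2
    have hcop : IsCoprime N 2 := Int.isCoprime_two_right.mpr (Int.odd_iff.mpr hodd)
    have hz : N ∣ z + m := hcop.dvd_of_dvd_mul_left (by
      rwa [show z + z + 2 * (m : ℤ) = 2 * (z + m) by ring] at hsum)
    have := Int.eq_zero_of_dvd_of_nonneg_of_lt (by omega) (by omega) hz
    omega
  rw [hm0] at hprod
  simp only [tentNum_iterate_zero hpos, tentSign, mul_zero, not_le.mpr hpos, if_false,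
    Finset.prod_const_one] at hprod
  omega

lemma itinerary_injOn {n : ℕ} (hn : 1 ≤ n) :
    Set.InjOn (fun m : ℕ => itinerary n ((2 * m : ℝ) / (2 ^ n - 1)))
      {m : ℕ | 2 * m < 2 ^ n - 1} := by
  intro a ha b hb hab
  have cast_lt : ∀ {m : ℕ}, 2 * m < 2 ^ n - 1 → (2 * m : ℤ) < 2 ^ n - 1 := by
    intro m hm
    zify at hm; push_cast [Nat.one_le_two_pow] at hm; omega
  have ha' := cast_lt ha
  have hb' := cast_lt hb
  have habs := abs_tentNum_iterate_sub (2 ^ n - 1) (2 * a) (2 * b) n (by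
    intro i hi
    have := congrFun hab ⟨i, hi⟩
    rw [← itinerary_eq_one_iff hn a ⟨i, hi⟩, ← itinerary_eq_one_iff hn b ⟨i, hi⟩]
    exact Eq.congr_left this)
  obtain ⟨a0, a1, -⟩ :=
    tentNum_iterate_mem (N := 2 ^ n - 1) (j := 2 * a) (by omega) ha'.le (by simp) n
  obtain ⟨b0, b1, -⟩ :=
    tentNum_iterate_mem (N := 2 ^ n - 1) (j := 2 * b) (by omega) hb'.le (by simp) n
  have hle : |(tentNum (2 ^ n - 1))^[n] (2 * a : ℤ) - (tentNum (2 ^ n - 1))^[n] (2 * b : ℤ)|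
      ≤ 2 ^ n - 1 := abs_le.mpr ⟨by omega, by omega⟩
  rw [habs] at hle
  by_contra hne
  have h1 : (1 : ℤ) ≤ |(2 * a : ℤ) - 2 * b| := Int.one_le_abs (by omega)
  have h2 : (0 : ℤ) < 2 ^ n := by positivity
  nlinarith

/-- The map sending a point `2m/(2^n - 1) ∈ [0,1)` to its itinerary is a bijection onto
the set of vectors in `(ℤ/2ℤ)^n` with an even number of entries equal to `1`.
In particular two such points with the same itinerary are equal. -/
theorem tent_itinerary_bijection (n : ℕ) (hn : 1 ≤ n) :
    Set.BijOn (fun m : ℕ => itinerary n ((2 * m : ℝ) / (2 ^ n - 1)))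
      {m : ℕ | 2 * m < 2 ^ n - 1}
      {β : Fin n → ZMod 2 | Even ((Finset.univ.filter fun i => β i = 1).card)} := by
  have hmaps : Set.MapsTo (fun m : ℕ => itinerary n ((2 * m : ℝ) / (2 ^ n - 1)))
      {m : ℕ | 2 * m < 2 ^ n - 1}
      {β : Fin n → ZMod 2 | Even ((Finset.univ.filter fun i => β i = 1).card)} :=
    fun m hm => itinerary_even hn hm
  refine ⟨hmaps, itinerary_injOn hn, ?_⟩
  obtain ⟨k, rfl⟩ : ∃ k, n = k + 1 := ⟨n - 1, by omega⟩
  have hdom : {m : ℕ | 2 * m < 2 ^ (k + 1) - 1} = ↑(Finset.range (2 ^ k)) := by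
    ext m
    simp only [Set.mem_ofPred_eq, Finset.coe_range, Set.mem_Iio, pow_succ]
    omega
  have hcod : {β : Fin (k + 1) → ZMod 2 | Even ((Finset.univ.filter fun i => β i = 1).card)} =
      ↑(Finset.univ.filter fun β : Fin (k + 1) → ZMod 2 =>
        Even ((Finset.univ.filter fun i => β i = 1).card)) := by
    ext β; simp
  have hinj := itinerary_injOn hn
  rw [hdom, hcod] at hmaps
  rw [hdom] at hinj
  rw [hdom, hcod]
  exact Finset.surjOn_of_injOn_of_card_le _ hmaps hinj (by simpa using card_even_le k)
end

section
/- Let k ≥ 0 be an integer and let ε be a real number with |ε| ≤ 1/2^{k+1}. Then for every integer i with 0 ≤ i ≤ k: (i) T^i((2/3)·(1/2^k + ε)) = (2/3)·(1/2^{k-i} + 2^i·ε), and (ii) T^i((2/3)·(1 + ε)) = (2/3)·(1 + (-1)^i·2^i·ε). -/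
lemma T_of_le_half {x : ℝ} (hx : x ≤ 1 / 2) : T x = 2 * x := by
  unfold T
  rw [abs_of_nonpos (by linarith)]
  ring

lemma T_of_half_le {x : ℝ} (hx : 1 / 2 ≤ x) : T x = 2 * (1 - x) := by
  unfold T
  rw [abs_of_nonneg (by linarith)]
  ring

/-- Local linearization of iterates of the tent map near `(2/3)·2^{-k}` and near `2/3`:
for `|ε| ≤ 1/2^{k+1}` and `0 ≤ i ≤ k`,
`T^i((2/3)(1/2^k + ε)) = (2/3)(1/2^{k-i} + 2^i ε)` and
`T^i((2/3)(1 + ε)) = (2/3)(1 + (-1)^i 2^i ε)`. -/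
theorem tent_iterate_near_two_thirds (k : ℕ) (ε : ℝ) (hε : |ε| ≤ 1 / 2 ^ (k + 1)) :
    ∀ i ≤ k,
      T^[i] ((2 / 3) * (1 / 2 ^ k + ε)) = (2 / 3) * (1 / 2 ^ (k - i) + 2 ^ i * ε) ∧
      T^[i] ((2 / 3) * (1 + ε)) = (2 / 3) * (1 + (-1) ^ i * 2 ^ i * ε) := by
  intro i
  induction i with
  | zero => intro _; simp
  | succ i ih =>
    intro hi
    obtain ⟨ih1, ih2⟩ := ih (by omega)
    obtain ⟨m, rfl⟩ : ∃ m, k = i + 1 + m := ⟨k - (i + 1), by omega⟩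
    have hpow : (1 : ℝ) / 2 ^ m ≤ 1 := by
      rw [div_le_one (by positivity)]
      exact one_le_pow₀ (by norm_num)
    have hδ : |2 ^ i * ε| ≤ 1 / 4 := by
      rw [abs_mul, abs_of_pos (by positivity : (0 : ℝ) < 2 ^ i)]
      calc (2 : ℝ) ^ i * |ε| ≤ 2 ^ i * (1 / 2 ^ (i + 1 + m + 1)) := by gcongr
        _ = 1 / 4 * (1 / 2 ^ m) := by field_simp; ring
        _ ≤ 1 / 4 := by linarith
    have hδ' : |(-1) ^ i * 2 ^ i * ε| ≤ 1 / 4 := by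
      rw [mul_assoc, abs_mul, abs_neg_one_pow, one_mul]
      exact hδ
    have e1 : i + 1 + m - i = m + 1 := by omega
    have e2 : i + 1 + m - (i + 1) = m := by omega
    have hhalf : (1 : ℝ) / 2 ^ (m + 1) = 1 / 2 * (1 / 2 ^ m) := by field_simp; ring
    rw [Function.iterate_succ_apply', Function.iterate_succ_apply', ih1, ih2, e1, e2, hhalf]
    constructor
    · rw [T_of_le_half (by linarith [(abs_le.mp hδ).2])]
      ring
    · rw [T_of_half_le (by linarith [(abs_le.mp hδ').1])]
      ring
end
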